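/- arXiv:2307.16237 — 2 statements merged into one kernel-verified Lean document; each statement's English description precedes it below -/
import Mathlib

section
/- Let R be a CUNC-ring and let S be a (not necessarily unital) subring of R, i.e., an additive subgroup of R closed under multiplication, which possesses an element 1_S ∈ S that is a two-sided multiplicative identity for S (possibly 1_S ≠ 1_R). Then S, regarded as a ring with identity 1_S, is a CUNC-ring. -/
/-!
A CUNC-ring is abelian: for an idempotent `e` and any `r`, both `e` and
`f = e + e r (1 - e)` are idempotents with `f = f + 0 = e + e r (1 - e)` two nil-clean
decompositions of the clean element `f = (1 - f) + (2 f - 1)`. Hence `e r (1 - e) = 0`, and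
symmetrically `(1 - e) r e = 0`. It follows that units are unipotent: if a unit `w` is `e + b`
with `e` central and `b` nilpotent, then `e = w - b` is a unit, so `e = 1`. In particular
`2` is nilpotent.

Let `a = f + u` be a clean decomposition in `S`. Then `w = u + (1 - oS)` is a unit of `R`, so
`w - 1 = u - oS` is nilpotent, and `a = (oS - f) + (2 f + (u - oS))` is a nil-clean decomposition
in `S`. For uniqueness, every nil-clean decomposition of `a` in `S` becomes one of
`a + (1 - oS)` in `R` after adding `1 - oS` to the idempotent, and
`a + (1 - oS) = f + w` is clean in `R`.
-/


open Pointwise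

section Defs

variable {R : Type*} [Ring R]

/-- An element is nil-clean if it is a sum of an idempotent and a nilpotent. -/
def IsNilCleanElem (a : R) : Prop :=
  ∃ e b : R, IsIdempotentElem e ∧ IsNilpotent b ∧ a = e + b

/-- An element is strongly nil-clean if it is a sum of a commuting idempotent and nilpotent. -/
def IsStronglyNilCleanElem (a : R) : Prop :=
  ∃ e b : R, IsIdempotentElem e ∧ IsNilpotent b ∧ Commute e b ∧ a = e + b

/-- An element is uniquely nil-clean if it is nil-clean and the idempotent in any
nil-clean decomposition of it is unique. -/
def IsUniquelyNilCleanElem (a : R) : Prop :=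
  IsNilCleanElem a ∧ ∀ e b f c : R, IsIdempotentElem e → IsNilpotent b →
    IsIdempotentElem f → IsNilpotent c → a = e + b → a = f + c → e = f

/-- An element is clean if it is a sum of an idempotent and a unit. -/
def IsCleanElem (a : R) : Prop :=
  ∃ e u : R, IsIdempotentElem e ∧ IsUnit u ∧ a = e + u

/-- An element is uniquely clean if it is clean and the idempotent in any
clean decomposition of it is unique. -/
def IsUniquelyCleanElem (a : R) : Prop :=
  IsCleanElem a ∧ ∀ e u f v : R, IsIdempotentElem e → IsUnit u →
    IsIdempotentElem f → IsUnit v → a = e + u → a = f + v → e = f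

end Defs

/-- A ring is abelian if every idempotent is central. -/
def IsAbelianRing (R : Type*) [Ring R] : Prop :=
  ∀ e : R, IsIdempotentElem e → ∀ r : R, e * r = r * e

/-- A ring is a UU-ring if every unit is unipotent. -/
def IsUURing (R : Type*) [Ring R] : Prop :=
  ∀ u : R, IsUnit u → ∃ b : R, IsNilpotent b ∧ u = 1 + b

/-- A ring is a CUNC-ring if every clean element is uniquely nil-clean. -/
def IsCUNCRing (R : Type*) [Ring R] : Prop :=
  ∀ a : R, IsCleanElem a → IsUniquelyNilCleanElem a

/-- A ring is a CUC-ring if every clean element is uniquely clean. -/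
def IsCUCRing (R : Type*) [Ring R] : Prop :=
  ∀ a : R, IsCleanElem a → IsUniquelyCleanElem a

/-- A ring is semipotent if every left ideal not contained in the Jacobson radical
contains a nonzero idempotent. -/
def IsSemipotentRing (R : Type*) [Ring R] : Prop :=
  ∀ L : Ideal R, ¬ L ≤ Ideal.jacobson (⊥ : Ideal R) → ∃ e ∈ L, e ≠ 0 ∧ IsIdempotentElem e

section Relative

variable {R : Type*} [Ring R]

/-- `a` is clean in the (possibly non-unital) subring given by the subset `S` of `R`,
with identity element `o`: it is a sum of an idempotent of `S` and an element of `S`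
invertible in `S`. -/
def IsCleanIn (S : Set R) (o : R) (a : R) : Prop :=
  ∃ f ∈ S, ∃ u ∈ S, f * f = f ∧ (∃ v ∈ S, u * v = o ∧ v * u = o) ∧ a = f + u

/-- `a` is nil-clean in the subring given by the subset `S` of `R`. -/
def IsNilCleanIn (S : Set R) (a : R) : Prop :=
  ∃ f ∈ S, ∃ b ∈ S, f * f = f ∧ IsNilpotent b ∧ a = f + b

/-- `a` is uniquely nil-clean in the subring given by the subset `S` of `R`. -/
def IsUniquelyNilCleanIn (S : Set R) (a : R) : Prop :=
  IsNilCleanIn S a ∧ ∀ f ∈ S, ∀ b ∈ S, ∀ g ∈ S, ∀ c ∈ S,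
    f * f = f → IsNilpotent b → g * g = g → IsNilpotent c →
      a = f + b → a = g + c → f = g

/-- The subring given by the subset `S` of `R`, with identity element `o`,
is a CUNC-ring: each of its clean elements is uniquely nil-clean in it. -/
def IsCUNCIn (S : Set R) (o : R) : Prop :=
  ∀ a ∈ S, IsCleanIn S o a → IsUniquelyNilCleanIn S a

end Relative

lemma isCleanElem_of_isIdempotentElem {R : Type*} [Ring R] {f : R}
    (hf : IsIdempotentElem f) : IsCleanElem f := by
  have hff : f * f = f := hf
  have hsq : (f + f - 1) * (f + f - 1) = 1 := by
    simp only [mul_sub, sub_mul, mul_add, add_mul, hff, mul_one, one_mul]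
    abel
  exact ⟨1 - f, f + f - 1, hf.one_sub, ⟨⟨_, _, hsq, hsq⟩, rfl⟩, by abel⟩

/-- An idempotent `f` that differs from an idempotent `e` by a nilpotent equals `e`. -/
lemma IsCUNCRing.eq_zero_of_idempotent_add {R : Type*} [Ring R] (h : IsCUNCRing R) {e n : R}
    (he : IsIdempotentElem e) (hn : IsNilpotent n) (hen : IsIdempotentElem (e + n)) :
    n = 0 := by
  have := (h _ (isCleanElem_of_isIdempotentElem hen)).2 (e + n) 0 e n hen
    IsNilpotent.zero he hn (add_zero _).symm rfl
  simpa using this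

lemma IsCUNCRing.isAbelianRing {R : Type*} [Ring R] (h : IsCUNCRing R) : IsAbelianRing R := by
  intro e he r
  have hee : e * e = e := he
  have hee' (x : R) : e * (e * x) = e * x := by rw [← mul_assoc, hee]
  have h1 : e * r - e * r * e = 0 := by
    refine h.eq_zero_of_idempotent_add he ⟨2, ?_⟩ ?_
    · simp only [pow_two, mul_sub, sub_mul, mul_assoc, hee']
      abel
    · simp only [IsIdempotentElem, mul_sub, sub_mul, mul_add, add_mul, mul_assoc, hee, hee']
      abel
  have h2 : r * e - e * r * e = 0 := by
    refine h.eq_zero_of_idempotent_add he ⟨2, ?_⟩ ?_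
    · simp only [pow_two, mul_sub, sub_mul, mul_assoc, hee']
      abel
    · simp only [IsIdempotentElem, mul_sub, sub_mul, mul_add, add_mul, mul_assoc, hee, hee']
      abel
  rw [sub_eq_zero.mp h1, sub_eq_zero.mp h2]

lemma IsCUNCRing.isNilpotent_sub_one {R : Type*} [Ring R] (h : IsCUNCRing R) {w : R}
    (hw : IsUnit w) : IsNilpotent (w - 1) := by
  obtain ⟨e, b, he, hb, hwe⟩ :=
    (h w ⟨0, w, IsIdempotentElem.zero, hw, (zero_add w).symm⟩).1
  have hwb : Commute b w := by
    rw [hwe]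
    exact Commute.add_right (h.isAbelianRing e he b).symm (Commute.refl b)
  -- a unit plus a commuting nilpotent is a unit
  have heu : IsUnit e := by
    have := hb.neg.isUnit_add_left_of_commute hw hwb.neg_left
    rwa [hwe, add_neg_cancel_right] at this
  have he1 : e = 1 := (IsIdempotentElem.iff_eq_one_of_isUnit heu).mp he
  rwa [hwe, he1, add_sub_cancel_left]

/-- A subring `S` (an additive subgroup closed under multiplication) of a CUNC-ring
`R`, possessing its own two-sided multiplicative identity `oS` (possibly different
from `1`), is itself a CUNC-ring. -/
theorem subring_cunc_of_cunc {R : Type*} [Ring R] (h : IsCUNCRing R)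
    (S : AddSubgroup R) (hmul : ∀ x ∈ S, ∀ y ∈ S, x * y ∈ S)
    (oS : R) (hoS : oS ∈ S) (hone : ∀ s ∈ S, oS * s = s ∧ s * oS = s) :
    IsCUNCIn (S : Set R) oS := by
  rintro a - ⟨f, hfS, u, huS, hf, ⟨v, hvS, huv, hvu⟩, rfl⟩
  have hoo : oS * oS = oS := (hone oS hoS).1
  have idem {g : R} (hg : g ∈ S) (hgg : g * g = g) : IsIdempotentElem (g + (1 - oS)) := by
    obtain ⟨h1, h2⟩ := hone g hg
    simp only [IsIdempotentElem, mul_sub, sub_mul, mul_add, add_mul, mul_one, one_mul,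
      h1, h2, hoo, hgg]
    abel
  have hunit : IsUnit (u + (1 - oS)) := by
    obtain ⟨h1, h2⟩ := hone u huS
    obtain ⟨h3, h4⟩ := hone v hvS
    refine ⟨⟨u + (1 - oS), v + (1 - oS), ?_, ?_⟩, rfl⟩ <;>
    · simp only [mul_sub, sub_mul, mul_add, add_mul, mul_one, one_mul,
        h1, h2, h3, h4, hoo, huv, hvu]
      abel
  refine ⟨⟨oS - f, S.sub_mem hoS hfS, f + f + (u - oS),
    S.add_mem (S.add_mem hfS hfS) (S.sub_mem huS hoS), ?_, ?_, by abel⟩, ?_⟩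
  · obtain ⟨h1, h2⟩ := hone f hfS
    simp only [mul_sub, sub_mul, h1, h2, hoo, hf]
    abel
  · have hu : IsNilpotent (u - oS) := by
      have := h.isNilpotent_sub_one hunit
      rwa [show u + (1 - oS) - 1 = u - oS by abel] at this
    -- the unit `-1` is unipotent, so `2` is nilpotent
    have h2 : IsNilpotent (2 : R) := by
      have := (h.isNilpotent_sub_one (isUnit_one.neg : IsUnit (-1 : R))).neg
      rwa [show -(-1 - 1 : R) = 2 by norm_num] at this
    have hff : IsNilpotent (f + f) := by
      rw [← two_mul]
      exact Commute.isNilpotent_mul_right (h.isAbelianRing f hf 2).symm h2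
    have hc : Commute f (u - oS) := h.isAbelianRing f hf _
    exact (hc.add_left hc).isNilpotent_add hff hu
  · intro g hg b _ g' hg' c _ hgg hb hgg' hc h1 h2
    have key := (h (f + (u + (1 - oS))) ⟨f, _, hf, hunit, rfl⟩).2
      (g + (1 - oS)) b (g' + (1 - oS)) c (idem hg hgg) hb (idem hg' hgg') hc
      (by rw [← add_assoc, h1]; abel) (by rw [← add_assoc, h2]; abel)
    exact add_right_cancel key
end

section
/- Let R be a ring. Then the following are equivalent: (1) R is a uniquely nil-clean ring (every element of R is uniquely nil-clean); (2) R is a semipotent CUNC-ring; (3) R is abelian, the Jacobson radical J(R) is nil, and R/J(R) is a Boolean ring. -/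
/-!
Idempotents of a CUNC-ring are central: `e` and `e + e r (1 - e)` are idempotents differing by a
square-zero element, and idempotents are clean because `e = (1 - e) + (2 e - 1)`. With central
idempotents, two facts do most of the work: one-sided inverses are two-sided, and if `w b = e` with
`e` idempotent and `b` nilpotent, then `e = w ^ n b ^ n e = 0`
(`IsAbelianRing.eq_zero_of_mul_nilpotent`).

* (1) implies (2). If `a = e + b`, then `e a = e (1 + b)` with `1 + b` a unit, so `e` lies in the
  left ideal generated by `a`. If `y b` (`b` nilpotent) decomposes with idempotent part `e`, then
  `e` is a left multiple of `b`, hence zero; so `y b` is nilpotent, `1 + y b` is a unit, and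
  nilpotents lie in `J(R)`. Thus an element outside `J(R)` has a nonzero idempotent part, which lies
  in the left ideal it generates.
* (2) implies (3). Every unit `u` of a CUNC-ring is unipotent (`IsCUNCRing.isNilpotent_sub_one`),
  which makes `J(R)` nil. If `a - a ^ 2` is not in `J(R)`, semipotency gives an idempotent
  `e = r (a - a ^ 2) ≠ 0`. Then `e a + (1 - e)` is a unit, so `e (1 - a)` is nilpotent; but `e` is
  a left multiple of it, so `e = 0`.
* (3) implies (1). Idempotents lift modulo the nil ideal `J(R)`, and if `e + b = f + c` then
  `e - f = c - b` is nilpotent, which for commuting idempotents forces `e = f`.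
-/


open Pointwise

theorem mem_twoSided_jacobson_iff {R : Type*} [Ring R] {x : R} :
    x ∈ TwoSidedIdeal.jacobson (⊥ : TwoSidedIdeal R) ↔ ∀ y, ∃ z, z * (y * x + 1) = 1 := by
  simp [TwoSidedIdeal.mem_jacobson_iff, TwoSidedIdeal.mem_bot, sub_eq_zero, mul_add, mul_assoc]

theorem mem_left_jacobson_iff {R : Type*} [Ring R] {x : R} :
    x ∈ Ideal.jacobson (⊥ : Ideal R) ↔ ∀ y, ∃ z, z * (y * x + 1) = 1 := by
  simp [Ideal.mem_jacobson_iff, sub_eq_zero, mul_add, mul_assoc]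

theorem IsIdempotentElem.isCleanElem {R : Type*} [Ring R] {e : R} (he : IsIdempotentElem e) :
    IsCleanElem e := by
  have h : (2 * e - 1) * (2 * e - 1) = 1 := by
    have : (2 * e - 1) * (2 * e - 1) = 4 * (e * e) - 4 * e + 1 := by noncomm_ring
    rw [this, he.eq, sub_self, zero_add]
  exact ⟨1 - e, 2 * e - 1, he.one_sub, ⟨⟨_, _, h, h⟩, rfl⟩, by noncomm_ring⟩

/-- It suffices that the only nil-clean decomposition of an idempotent `e` is `e + 0`. -/
theorem isAbelianRing_of_forall_idempotent {R : Type*} [Ring R]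
    (h : ∀ a : R, IsIdempotentElem a → IsUniquelyNilCleanElem a) : IsAbelianRing R := by
  intro e he r
  have hee : e * e = e := he
  have hz (x : R) : e * (e * x) = e * x := by rw [← mul_assoc, hee]
  -- Applied below to elements of the off-diagonal Peirce corners `e R (1 - e)`, `(1 - e) R e`.
  have key (n : R) (hn : n * n = 0) (hs : e * n + n * e = n) : n = 0 := by
    have hf : IsIdempotentElem (e + n) := by
      change (e + n) * (e + n) = e + n
      calc (e + n) * (e + n) = e * e + (e * n + n * e) + n * n := by noncomm_ring
        _ = e + n := by rw [hee, hs, hn, add_zero]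
    have := (h _ hf).2 (e + n) 0 e n hf .zero he ⟨2, by rw [pow_two, hn]⟩ (by simp) rfl
    simpa using this
  have h1 := key (e * r - e * r * e)
    (by simp only [sub_mul, mul_sub, mul_assoc, hz]; abel)
    (by simp only [sub_mul, mul_sub, mul_assoc, hee, hz]; abel)
  have h2 := key (r * e - e * r * e)
    (by simp only [sub_mul, mul_sub, mul_assoc, hz]; abel)
    (by simp only [sub_mul, mul_sub, mul_assoc, hee, hz]; abel)
  rw [sub_eq_zero.1 h1, sub_eq_zero.1 h2]

theorem IsAbelianRing.mul_eq_one_symm {R : Type*} [Ring R] (hR : IsAbelianRing R) {v u : R}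
    (h : v * u = 1) : u * v = 1 := by
  have hg : IsIdempotentElem (u * v) := by
    change u * v * (u * v) = u * v
    rw [mul_assoc, ← mul_assoc v, h, one_mul]
  calc u * v = u * v * (v * u) := by rw [h, mul_one]
    _ = v * (u * v) * u := by rw [← mul_assoc, hR _ hg v]
    _ = v * u * (v * u) := by simp only [mul_assoc]
    _ = 1 := by rw [h, one_mul]

theorem IsAbelianRing.eq_zero_of_mul_nilpotent {R : Type*} [Ring R] (hR : IsAbelianRing R)
    {e w b : R} (he : IsIdempotentElem e) (hb : IsNilpotent b) (h : w * b = e) : e = 0 := by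
  obtain ⟨n, hn⟩ := hb
  have key (k : ℕ) : w ^ k * b ^ k * e = e := by
    induction k with
    | zero => simp
    | succ k ih =>
      calc w ^ (k + 1) * b ^ (k + 1) * e = w ^ k * (w * b) * b ^ k * e := by
            rw [pow_succ, pow_succ']; simp only [mul_assoc]
        _ = w ^ k * b ^ k * (e * e) := by
            rw [h, mul_assoc (w ^ k), hR e he]; simp only [mul_assoc]
        _ = e := by rw [he.eq, ih]
  rw [← key n, hn, mul_zero, zero_mul]

/-- The idempotent part of a nil-clean element lies in the left ideal which that element
generates. -/
theorem IsAbelianRing.exists_mul_eq_idempotent {R : Type*} [Ring R] (hR : IsAbelianRing R)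
    {e b : R} (he : IsIdempotentElem e) (hb : IsNilpotent b) : ∃ w, w * (e + b) = e := by
  obtain ⟨u, hu⟩ := hb.isUnit_one_add
  refine ⟨↑u⁻¹ * e, ?_⟩
  have : e * (e + b) = u * e := by
    rw [hu, mul_add, he.eq, add_mul, one_mul, hR e he b]
  rw [mul_assoc, this, Units.inv_mul_cancel_left]

/-- In an abelian nil-clean ring all nilpotent elements lie in the Jacobson radical; the conclusion
spells out membership. -/
theorem IsAbelianRing.exists_mul_eq_one_of_isNilpotent {R : Type*} [Ring R] (hR : IsAbelianRing R)
    (hnc : ∀ a : R, IsNilCleanElem a) {b : R} (hb : IsNilpotent b) (y : R) :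
    ∃ z, z * (y * b + 1) = 1 := by
  obtain ⟨e, c, he, hc, h⟩ := hnc (y * b)
  obtain ⟨w, hw⟩ := hR.exists_mul_eq_idempotent he hc
  rw [← h, ← mul_assoc] at hw
  rw [h, hR.eq_zero_of_mul_nilpotent he hb hw, zero_add, add_comm]
  exact hc.isUnit_one_add.exists_left_inv

theorem IsCUNCRing.isNilpotent_sub_one_s12 {R : Type*} [Ring R] (hC : IsCUNCRing R)
    (hR : IsAbelianRing R) {u : R} (hu : IsUnit u) : IsNilpotent (u - 1) := by
  obtain ⟨e, b, he, hb, h⟩ := (hC u ⟨0, u, .zero, hu, (zero_add u).symm⟩).1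
  obtain ⟨u, rfl⟩ := hu
  have h1 : (↑u⁻¹ * (1 - e)) * b = 1 - e := by
    have : (1 - e) * b = u * (1 - e) := by
      rw [← hR _ he.one_sub, h, mul_add, sub_mul 1 e e, he.eq, one_mul, sub_self, zero_add]
    rw [mul_assoc, this, Units.inv_mul_cancel_left]
  have h2 := sub_eq_zero.1 (hR.eq_zero_of_mul_nilpotent he.one_sub hb h1)
  rwa [h, ← h2, add_sub_cancel_left]

theorem isSemipotentRing_of_uniquelyNilClean {R : Type*} [Ring R]
    (h : ∀ a : R, IsUniquelyNilCleanElem a) : IsSemipotentRing R := by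
  have hR := isAbelianRing_of_forall_idempotent fun a _ => h a
  intro L hL
  obtain ⟨x, hxL, hx⟩ := SetLike.not_le_iff_exists.1 hL
  obtain ⟨e, b, he, hb, rfl⟩ := (h x).1
  obtain ⟨w, hw⟩ := hR.exists_mul_eq_idempotent he hb
  refine ⟨e, hw ▸ L.mul_mem_left w hxL, ?_, he⟩
  rintro rfl
  rw [zero_add] at hx
  exact hx (mem_left_jacobson_iff.2
    (hR.exists_mul_eq_one_of_isNilpotent (fun a => (h a).1) hb))

theorem IsCUNCRing.isNilpotent_of_mem_jacobson {R : Type*} [Ring R] (hC : IsCUNCRing R)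
    (hR : IsAbelianRing R) {x : R}
    (hx : x ∈ TwoSidedIdeal.jacobson (⊥ : TwoSidedIdeal R)) : IsNilpotent x := by
  obtain ⟨z, hz⟩ := mem_twoSided_jacobson_iff.1 hx 1
  rw [one_mul] at hz
  have hu : IsUnit (x + 1) := ⟨⟨_, z, hR.mul_eq_one_symm hz, hz⟩, rfl⟩
  simpa using hC.isNilpotent_sub_one_s12 hR hu

theorem IsCUNCRing.mul_self_sub_mem_jacobson {R : Type*} [Ring R] (hC : IsCUNCRing R)
    (hR : IsAbelianRing R) (hS : IsSemipotentRing R) (a : R) :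
    a * a - a ∈ TwoSidedIdeal.jacobson (⊥ : TwoSidedIdeal R) := by
  by_contra hn
  have hL : ¬ Ideal.span {a * a - a} ≤ Ideal.jacobson (⊥ : Ideal R) := by
    intro hle
    exact hn (mem_twoSided_jacobson_iff.2
      (mem_left_jacobson_iff.1 (hle (Ideal.mem_span_singleton_self _))))
  obtain ⟨e, heL, he0, he⟩ := hS _ hL
  obtain ⟨r, hr⟩ := Ideal.mem_span_singleton'.1 heL
  have hee : e * e = e := he
  have hs : (r * (a - 1)) * a = e := by rw [← hr]; noncomm_ring
  have ht : (r * a) * (a - 1) = e := by rw [← hr]; noncomm_ring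
  generalize r * (a - 1) = s at hs
  generalize r * a = t at ht
  -- On the corner `e R`, `s` is a left inverse of `a`; adding `1 - e` extends this to `R`.
  have hvu : (s * e + (1 - e)) * (a * e + (1 - e)) = 1 := by
    have h1 : e * a = a * e := hR e he a
    calc (s * e + (1 - e)) * (a * e + (1 - e))
        = s * (e * a) * e + s * (e - e * e) + (a * e - e * a * e) + (1 - e - (e - e * e)) := by
          noncomm_ring
      _ = s * a * (e * e) + s * (e - e * e) + (a * e - a * (e * e)) + (1 - e - (e - e * e)) := by
          rw [h1]; noncomm_ring
      _ = 1 := by rw [hee, hs, hee]; simp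
  have hu : IsUnit (a * e + (1 - e)) := ⟨⟨_, _, hR.mul_eq_one_symm hvu, hvu⟩, rfl⟩
  have hnil := hC.isNilpotent_sub_one_s12 hR hu
  refine he0 (hR.eq_zero_of_mul_nilpotent he hnil (w := t) ?_)
  calc t * (a * e + (1 - e) - 1) = t * (a - 1) * e := by noncomm_ring
    _ = e := by rw [ht, hee]

theorem uniquelyNilClean_of_jacobson {R : Type*} [Ring R] (hR : IsAbelianRing R)
    (hJ : ∀ x ∈ TwoSidedIdeal.jacobson (⊥ : TwoSidedIdeal R), IsNilpotent x)
    (hB : ∀ a : (TwoSidedIdeal.jacobson (⊥ : TwoSidedIdeal R)).ringCon.Quotient, a * a = a)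
    (a : R) : IsUniquelyNilCleanElem a := by
  let f := (TwoSidedIdeal.jacobson (⊥ : TwoSidedIdeal R)).ringCon.mk'
  have hker (x : R) (hx : f x = 0) : IsNilpotent x := by
    apply hJ
    rw [← TwoSidedIdeal.ker_ringCon_mk' (TwoSidedIdeal.jacobson (⊥ : TwoSidedIdeal R))]
    exact (TwoSidedIdeal.mem_ker _).2 hx
  constructor
  · obtain ⟨e, he, hfe⟩ := exists_isIdempotentElem_eq_of_ker_isNilpotent f
      (fun x hx => hker x hx) (f a) ⟨a, rfl⟩ (hB _)
    exact ⟨e, a - e, he, hker _ (by rw [map_sub, hfe, sub_self]), by abel⟩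
  · intro e b g c he hb hg hc h1 h2
    have hab : b = a - e := eq_sub_of_add_eq' h1.symm
    have hac : c = a - g := eq_sub_of_add_eq' h2.symm
    have hea (x : R) : Commute e x := hR e he x
    have hga (x : R) : Commute g x := hR g hg x
    have hcb : Commute c b := by
      rw [hab, hac]
      exact ((Commute.refl a).sub_right (hea a).symm).sub_left (hga _)
    refine eq_of_isNilpotent_sub_of_isIdempotentElem_of_commute he hg ?_ (hea g)
    have : e - g = c - b := by rw [hab, hac]; abel
    rw [this]
    exact hcb.isNilpotent_sub hc hb

/-- `R` is uniquely nil-clean iff it is a semipotent CUNC-ring, iff `R` is abelian,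
`J(R)` is nil and `R/J(R)` is Boolean. -/
theorem uniquelyNilClean_tfae {R : Type*} [Ring R] :
    [∀ a : R, IsUniquelyNilCleanElem a,
     IsSemipotentRing R ∧ IsCUNCRing R,
     IsAbelianRing R ∧
       (∀ x ∈ TwoSidedIdeal.jacobson (⊥ : TwoSidedIdeal R), IsNilpotent x) ∧
       (∀ a : (TwoSidedIdeal.jacobson (⊥ : TwoSidedIdeal R)).ringCon.Quotient,
         a * a = a)].TFAE := by
  tfae_have 1 → 2 := fun h => ⟨isSemipotentRing_of_uniquelyNilClean h, fun a _ => h a⟩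
  tfae_have 2 → 3 := by
    rintro ⟨hS, hC⟩
    have hR := isAbelianRing_of_forall_idempotent fun a ha => hC a ha.isCleanElem
    refine ⟨hR, fun x hx => hC.isNilpotent_of_mem_jacobson hR hx, fun a => ?_⟩
    induction a using Quotient.inductionOn with
    | h a =>
      exact (RingCon.eq _).2 ((TwoSidedIdeal.rel_iff _ _ _).2
        (hC.mul_self_sub_mem_jacobson hR hS a))
  tfae_have 3 → 1 := fun ⟨hR, hJ, hB⟩ => uniquelyNilClean_of_jacobson hR hJ hB
  tfae_finish
end
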